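/- For u_p = u(1^ω,(EERR)^ω) and k ≥ 1, the words s_{4k+1} = R(w_{4k−3})·w_{4k−4}^{−1}·w_{4k−1}·w_{4k−4}^{−1}·w_{4k−3} and s_{4k+3} = E(w_{4k−1})·w_{4k−2}^{−1}·w_{4k+1}·w_{4k−2}^{−1}·w_{4k−1} are bispecial factors of u_p; s_{4k+1} is a palindrome contained in w_{4k+1} with bilateral extensions 1·s_{4k+1}·0 and 0·s_{4k+1}·1, and s_{4k+3} is an E-palindrome contained in w_{4k+3} with bilateral extensions 0·s_{4k+3}·0 and 1·s_{4k+3}·1. -/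

import Mathlib

abbrev Word := List Bool

/-- The exchange antimorphism `E`: complement each letter and reverse. -/
def Ebar (w : Word) : Word := (w.map Bool.not).reverse

def IsPal (w : Word) : Prop := w.reverse = w
def IsEPal (w : Word) : Prop := Ebar w = w

open Classical in
lemma exists_minLength {Q : Word → Prop} (hex : ∃ v, Q v) :
    ∃ v, Q v ∧ ∀ v', Q v' → v.length ≤ v'.length := by
  classical
  have h : ∃ n, ∃ v, Q v ∧ v.length = n := ⟨_, hex.choose, hex.choose_spec, rfl⟩
  obtain ⟨v, hv, hlen⟩ := Nat.find_spec h
  exact ⟨v, hv, fun v' hv' => by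
    rw [hlen]; exact Nat.find_min' h ⟨v', hv', rfl⟩⟩

lemma pal_ext (w : Word) : ∃ v, w <+: v ∧ IsPal v :=
  ⟨w ++ w.reverse, List.prefix_append _ _, by simp [IsPal]⟩

lemma epal_ext (w : Word) : ∃ v, w <+: v ∧ IsEPal v :=
  ⟨w ++ Ebar w, List.prefix_append _ _, by
    simp [IsEPal, Ebar, List.map_reverse, List.map_map, Function.comp_def, Bool.not_not]⟩

/-- The palindromic closure: the shortest palindrome having `w` as a prefix. -/
noncomputable def palCl (w : Word) : Word := (exists_minLength (pal_ext w)).choose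

/-- The pseudopalindromic closure: the shortest `E`-palindrome having `w` as a prefix. -/
noncomputable def epalCl (w : Word) : Word := (exists_minLength (epal_ext w)).choose

/-- Prefixes of the generalized pseudostandard word `u(1^ω, (EERR)^ω)`
(the letter `1` is `true`). -/
noncomputable def wp : ℕ → Word
  | 0 => []
  | n+1 => if (n+1) % 4 = 1 ∨ (n+1) % 4 = 2
           then epalCl (wp n ++ [true])
           else palCl (wp n ++ [true])

/-- Factors of `u_p`. -/
def FactorUp (v : Word) : Prop := ∃ n, v <:+: wp n

/-- Factor complexity of `u_p`. -/
noncomputable def Cp (n : ℕ) : ℕ := Set.ncard {v : Word | FactorUp v ∧ v.length = n}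

/-- The weak bispecial candidate `s_{4k+1}` (an overlap product). -/
noncomputable def s1 (k : ℕ) : Word :=
  (wp (4*k-3)).reverse ++ (wp (4*k-1)).drop (wp (4*k-4)).length
    ++ (wp (4*k-3)).drop (wp (4*k-4)).length

/-- The weak bispecial candidate `s_{4k+3}` (an overlap product). -/
noncomputable def s3 (k : ℕ) : Word :=
  Ebar (wp (4*k-1)) ++ (wp (4*k+1)).drop (wp (4*k-2)).length
    ++ (wp (4*k-1)).drop (wp (4*k-2)).length

/-- `sOdd k = s_{2k+1}`. -/
noncomputable def sOdd (k : ℕ) : Word := if k % 2 = 0 then s1 (k/2) else s3 (k/2)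

/-!
Let `θ` be `R` or `E`. When a `θ`-fixed word starts with a word fixed by `R` or `E`, it also ends
with the `θ`-image of that word, so two fixed prefixes of `u_p` produce a shift of the shorter one
that either preserves all letters or exchanges them. Such shifts yield the length recurrences
`|w_{n+1}| = 2|w_n| - r`, where `r` is the length of the longest prefix of `w_n` fixed by the
antimorphism of `w_{n+1}` and followed by the right letter (`r = -2` when there is none), and rule
out every pseudopalindromic prefix of `u_p` other than the `w_m`, `1` and `101`; both facts are
obtained by a simultaneous induction.

The recurrences give `w_{4k} = P·A⁻¹·P` for `A = w_{4k-4}`, `P = w_{4k-1}`, and likewise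
`w_{4k+2} = P·A⁻¹·P` for `A = w_{4k-2}`, `P = w_{4k+1}`. Write `B = A·y` for the remaining word
`B = w_{4k-3}`, respectively `B = w_{4k-1}`, of the overlap product, so that `s = θ(y)·P·y`. Since
`B` is followed by `1` in `P`, the left copy of `P` in `P·A⁻¹·P` places the letter `θ(1)` and then
`θ(y)` before the right copy of `P`, while the next `w` continues `P·A⁻¹·P` by `y·0`. This exhibits
the extension `θ(1)·s·0`, and the other one is its image under `θ`.
-/

/-! ### The antimorphisms `R` and `E` and their closures -/

/-- The antimorphisms fixing or exchanging the two letters: `theta false` is the reversal `R` and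
`theta true` is the exchange antimorphism `E`. -/
def theta (e : Bool) (w : Word) : Word := (w.map (e ^^ ·)).reverse

lemma theta_false (w : Word) : theta false w = w.reverse := by simp [theta]

lemma theta_true (w : Word) : theta true w = Ebar w := by simp [theta, Ebar]

@[simp] lemma theta_nil (e : Bool) : theta e [] = [] := rfl

@[simp] lemma theta_append (e : Bool) (v w : Word) :
    theta e (v ++ w) = theta e w ++ theta e v := by simp [theta]

@[simp] lemma theta_cons (e a : Bool) (w : Word) :
    theta e (a :: w) = theta e w ++ [e ^^ a] := by simp [theta]

@[simp] lemma length_theta (e : Bool) (w : Word) : (theta e w).length = w.length := by simp [theta]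

@[simp] lemma theta_theta (e : Bool) (w : Word) : theta e (theta e w) = w := by
  simp [theta, List.map_reverse, Function.comp_def]

lemma theta_comm (e f : Bool) (w : Word) : theta e (theta f w) = theta f (theta e w) := by
  simp [theta, List.map_reverse, Function.comp_def, Bool.xor_left_comm]

lemma theta_isPrefix_theta {e : Bool} {v w : Word} (h : v <:+ w) : theta e v <+: theta e w :=
  List.reverse_prefix.2 (h.map _)

lemma theta_isSuffix_theta {e : Bool} {v w : Word} (h : v <+: w) : theta e v <:+ theta e w :=
  List.reverse_suffix.2 (h.map _)

lemma theta_isInfix_theta {e : Bool} {v w : Word} (h : v <:+: w) : theta e v <:+: theta e w :=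
  List.reverse_infix.2 (h.map _)

lemma eq_append_theta {e : Bool} {v z T : Word} (hT : theta e T = T) (hvz : v ++ z <+: T)
    (hlen : T.length = 2 * v.length + z.length) : T = v ++ z ++ theta e v := by
  obtain ⟨t, rfl⟩ := hvz
  have hends : theta e t ++ theta e (v ++ z) = v ++ (z ++ t) := by
    rw [← theta_append, hT, List.append_assoc]
  have htv : theta e t = v := by
    refine (List.append_inj hends ?_).1
    simp only [List.length_append, length_theta] at hlen ⊢
    omega
  rw [← htv, theta_theta]

lemma eq_theta_append_of_overlap {e : Bool} {A P Q p : Word} (hA : theta e A = A)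
    (hP : theta e P = P) (hQ : theta e Q = Q) (hAp : P = A ++ p) (hPQ : P <+: Q)
    (hlen : Q.length + A.length = 2 * P.length) : Q = theta e p ++ P := by
  have hpA : theta e p ++ A = P := by rw [← hA, ← theta_append, ← hAp, hP]
  have hQp : Q = theta e p ++ A ++ theta e (theta e p) := by
    refine eq_append_theta hQ (hpA ▸ hPQ) ?_
    have := congrArg List.length hpA
    simp only [List.length_append, length_theta] at this ⊢
    omega
  rw [hQp, theta_theta, List.append_assoc, ← hAp]

/-- `L` is the shortest `theta e`-fixed word having `w` as a prefix. -/
structure IsThetaClosure (e : Bool) (w L : Word) : Prop where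
  isPrefix : w <+: L
  fixed : theta e L = L
  length_le : ∀ v, w <+: v → theta e v = v → L.length ≤ v.length

lemma isThetaClosure_palCl (w : Word) : IsThetaClosure false w (palCl w) := by
  obtain ⟨⟨hpre, hpal⟩, hmin⟩ := (exists_minLength (pal_ext w)).choose_spec
  exact ⟨hpre, (theta_false _).trans hpal,
    fun v hv hfix ↦ hmin v ⟨hv, (theta_false v).symm.trans hfix⟩⟩

lemma isThetaClosure_epalCl (w : Word) : IsThetaClosure true w (epalCl w) := by
  obtain ⟨⟨hpre, hpal⟩, hmin⟩ := (exists_minLength (epal_ext w)).choose_spec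
  exact ⟨hpre, (theta_true _).trans hpal,
    fun v hv hfix ↦ hmin v ⟨hv, (theta_true v).symm.trans hfix⟩⟩

lemma IsThetaClosure.length_le_of_fixed_suffix {e : Bool} {v z L : Word}
    (hL : IsThetaClosure e (v ++ z) L) (hz : theta e z = z) :
    L.length ≤ 2 * v.length + z.length := by
  have := hL.length_le (v ++ z ++ theta e v) (List.prefix_append _ _) (by simp [hz])
  simp only [List.length_append, length_theta] at this
  omega

lemma IsThetaClosure.length_add_le_of_fixed_prefix {e f c : Bool} {w r L : Word}
    (hL : IsThetaClosure e (w ++ [c]) L) (hw : theta f w = w) (hr : theta e r = r)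
    (hrw : r ++ [e ^^ (f ^^ c)] <+: w) : L.length + r.length ≤ 2 * w.length := by
  -- Reflecting `r ++ [_]` inside `w` gives a `theta e`-fixed suffix of `w ++ [c]`.
  obtain ⟨v, hv⟩ : (e ^^ c) :: theta f r <:+ w := by
    simpa [hw, Bool.xor_left_comm] using theta_isSuffix_theta (e := f) hrw
  have hz : theta e ((e ^^ c) :: theta f r ++ [c]) = (e ^^ c) :: theta f r ++ [c] := by
    simp [theta_comm e f, hr]
  rw [← hv, List.append_assoc] at hL
  have := hL.length_le_of_fixed_suffix hz
  simp only [← hv, List.length_append, List.length_cons, List.length_nil, length_theta] at this ⊢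
  omega

/-! ### Fixed prefixes of an infinite word -/

/-- The word formed by the first `l` letters of the infinite word `u`. -/
def initialWord (u : ℕ → Bool) (l : ℕ) : Word := (List.range l).map u

lemma initialWord_succ (u : ℕ → Bool) (l : ℕ) :
    initialWord u (l + 1) = initialWord u l ++ [u l] := by
  simp [initialWord, List.range_succ]

@[simp] lemma length_initialWord (u : ℕ → Bool) (l : ℕ) : (initialWord u l).length = l := by
  simp [initialWord]

lemma initialWord_isPrefix (u : ℕ → Bool) {l m : ℕ} (h : l ≤ m) :
    initialWord u l <+: initialWord u m := by
  obtain ⟨d, rfl⟩ := Nat.exists_eq_add_of_le h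
  rw [initialWord, initialWord, List.range_add, List.map_append]
  exact List.prefix_append _ _

/-- The first `l` letters of the infinite word `u` form a `theta e`-fixed word, expressed letter by
letter. -/
def IsThetaPrefix (u : ℕ → Bool) (e : Bool) (l : ℕ) : Prop :=
  ∀ i < l, u (l - 1 - i) = (e ^^ u i)

lemma theta_initialWord_eq_iff {u : ℕ → Bool} {e : Bool} {l : ℕ} :
    theta e (initialWord u l) = initialWord u l ↔ IsThetaPrefix u e l := by
  simp only [List.ext_getElem_iff, length_theta, true_and, length_initialWord]
  simp only [theta, initialWord, List.getElem_reverse, List.getElem_map, List.getElem_range,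
    List.length_map, List.length_range]
  refine ⟨fun h i hi ↦ ?_, fun h i hi _ ↦ ?_⟩
  · have := h i hi hi
    rw [← this]
    simp
  · rw [h i hi]
    simp

lemma isThetaPrefix_zero (u : ℕ → Bool) (e : Bool) : IsThetaPrefix u e 0 := by
  simp [IsThetaPrefix]

section ThetaPrefix

variable {u : ℕ → Bool} {e f g : Bool} {l m L : ℕ}

lemma IsThetaPrefix.apply_add_sub (hL : IsThetaPrefix u e L) (hl : IsThetaPrefix u f l)
    (hlL : l ≤ L) {i : ℕ} (hi : i < l) : u (i + (L - l)) = (e ^^ (f ^^ u i)) := by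
  rw [← hl i hi, ← hL _ (by omega)]
  congr 1
  omega

lemma IsThetaPrefix.sub (hL : IsThetaPrefix u e L) (hl : IsThetaPrefix u f l)
    (hm : IsThetaPrefix u g m) (hlL : l ≤ L) (hmL : m ≤ L) :
    IsThetaPrefix u (e ^^ (f ^^ g)) (m - (L - l)) := by
  intro i hi
  have hshift := hL.apply_add_sub hl hlL (i := m - (L - l) - 1 - i) (by omega)
  rw [show m - (L - l) - 1 - i + (L - l) = m - 1 - i by omega, hm i (by omega)] at hshift
  have cancel : ∀ e f g x y : Bool, (g ^^ y) = (e ^^ (f ^^ x)) → x = ((e ^^ (f ^^ g)) ^^ y) := by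
    decide
  exact cancel _ _ _ _ _ hshift

lemma IsThetaPrefix.even (h : IsThetaPrefix u true l) : l % 2 = 0 := by
  by_contra hodd
  have hcenter := h ((l - 1) / 2) (by omega)
  rw [show l - 1 - (l - 1) / 2 = (l - 1) / 2 by omega] at hcenter
  simp at hcenter

lemma IsThetaPrefix.eq_of_pos (he : IsThetaPrefix u e l) (hf : IsThetaPrefix u f l)
    (hl : 0 < l) : e = f := by
  have := he 0 hl
  rwa [hf 0 hl, Bool.xor_left_inj, eq_comm] at this

end ThetaPrefix

/-! ### Lengths of pseudopalindromic prefixes -/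

/-- The antimorphism `theta (wpType n)` fixes `w_n`: the directive bi-sequence prescribes `E` for
`n ≡ 1, 2` and `R` for `n ≡ 3, 0` modulo `4`. -/
def wpType (n : ℕ) : Bool := decide (n % 4 = 1 ∨ n % 4 = 2)

lemma wpType_eq_true_iff {n : ℕ} : wpType n = true ↔ n % 4 = 1 ∨ n % 4 = 2 := by simp [wpType]

lemma wpType_eq_false_iff {n : ℕ} : wpType n = false ↔ n % 4 = 3 ∨ n % 4 = 0 := by
  simp only [wpType, decide_eq_false_iff_not]
  omega

lemma isThetaClosure_wp_succ (n : ℕ) :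
    IsThetaClosure (wpType (n + 1)) (wp n ++ [true]) (wp (n + 1)) := by
  by_cases h : (n + 1) % 4 = 1 ∨ (n + 1) % 4 = 2
  · rw [wp, if_pos h, wpType, decide_eq_true h]
    exact isThetaClosure_epalCl _
  · rw [wp, if_neg h, wpType, decide_eq_false h]
    exact isThetaClosure_palCl _

lemma theta_wp (n : ℕ) : theta (wpType n) (wp n) = wp n := by
  cases n with
  | zero => simp [wp]
  | succ n => exact (isThetaClosure_wp_succ n).fixed

lemma wp_isPrefix {m n : ℕ} (h : m ≤ n) : wp m <+: wp n := by
  induction n, h using Nat.le_induction with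
  | base => exact List.prefix_rfl
  | succ n _ ih =>
    exact ih.trans ((List.prefix_append _ _).trans (isThetaClosure_wp_succ n).isPrefix)

lemma wp_append_true_isPrefix {m n : ℕ} (h : m < n) : wp m ++ [true] <+: wp n :=
  (isThetaClosure_wp_succ m).isPrefix.trans (wp_isPrefix h)

/-- The length of the pseudopalindromic prefix `w_n`. -/
noncomputable def wpLen (n : ℕ) : ℕ := (wp n).length

lemma wpLen_zero : wpLen 0 = 0 := by simp [wpLen, wp]

lemma wpLen_strictMono : StrictMono wpLen := by
  refine strictMono_nat_of_lt_succ fun n ↦ ?_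
  have := (wp_append_true_isPrefix n.lt_add_one).length_le
  rwa [List.length_append, List.length_singleton] at this

/-- The infinite word `u_p`. Its letter at position `i` is read off `w_{i+1}`, which is long enough
for the default value of `getD` never to occur. -/
noncomputable def up (i : ℕ) : Bool := (wp (i + 1)).getD i false

lemma getD_wp {n i : ℕ} (hi : i < wpLen n) : (wp n).getD i false = up i := by
  have hi' : i < wpLen (i + 1) := i.lt_add_one.trans_le (wpLen_strictMono.le_apply)
  rcases le_total n (i + 1) with h | h
  · obtain ⟨t, ht⟩ := wp_isPrefix h
    rw [up, ← ht, List.getD_append _ _ _ _ hi]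
  · obtain ⟨t, ht⟩ := wp_isPrefix h
    rw [up, ← ht, List.getD_append _ _ _ _ hi']

lemma initialWord_up_wpLen (n : ℕ) : initialWord up (wpLen n) = wp n := by
  refine List.ext_getElem (length_initialWord _ _) fun i _ hi ↦ ?_
  rw [← List.getD_eq_getElem _ false hi, getD_wp hi]
  simp [initialWord]

lemma up_wpLen (n : ℕ) : up (wpLen n) = true := by
  rw [← getD_wp (wpLen_strictMono n.lt_add_one)]
  obtain ⟨t, ht⟩ := wp_append_true_isPrefix n.lt_add_one
  simp [← ht, wpLen]

lemma isThetaPrefix_wpLen (n : ℕ) : IsThetaPrefix up (wpType n) (wpLen n) := by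
  rw [← theta_initialWord_eq_iff, initialWord_up_wpLen, theta_wp]

lemma wpLen_succ_le_two_mul (n : ℕ) : wpLen (n + 1) ≤ 2 * wpLen n + 2 := by
  have hcl := isThetaClosure_wp_succ n
  rw [← List.append_nil (wp n ++ [true])] at hcl
  simpa [wpLen, mul_add] using hcl.length_le_of_fixed_suffix (theta_nil _)

lemma wpLen_succ_add_le {n r : ℕ} (hr : IsThetaPrefix up (wpType (n + 1)) r)
    (hrn : r < wpLen n) (hup : up r = (wpType (n + 1) ^^ !wpType n)) :
    wpLen (n + 1) + r ≤ 2 * wpLen n := by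
  have hpre : initialWord up r ++ [wpType (n + 1) ^^ (wpType n ^^ true)] <+: wp n := by
    rw [Bool.xor_true, ← hup, ← initialWord_succ, ← initialWord_up_wpLen]
    exact initialWord_isPrefix up hrn
  simpa [wpLen] using (isThetaClosure_wp_succ n).length_add_le_of_fixed_prefix (theta_wp n)
    (theta_initialWord_eq_iff.2 hr) hpre

lemma wpLen_succ_le_of_isThetaPrefix {n l : ℕ} (hl : IsThetaPrefix up (wpType (n + 1)) l)
    (hnl : wpLen n < l) : wpLen (n + 1) ≤ l := by
  have hpre : wp n ++ [true] <+: initialWord up l := by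
    rw [← initialWord_up_wpLen, ← up_wpLen n, ← initialWord_succ]
    exact initialWord_isPrefix up hnl
  simpa [wpLen] using
    (isThetaClosure_wp_succ n).length_le _ hpre (theta_initialWord_eq_iff.2 hl)

lemma isThetaPrefix_of_two_mul_eq_add {n r : ℕ} (hr : 2 * wpLen n = wpLen (n + 1) + r) :
    IsThetaPrefix up (wpType (n + 1)) r ∧ up r = (wpType (n + 1) ^^ !wpType n) := by
  have hlt := wpLen_strictMono n.lt_add_one
  have hn := isThetaPrefix_wpLen n
  have hsub := (isThetaPrefix_wpLen (n + 1)).sub hn hn hlt.le hlt.le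
  have hup := (isThetaPrefix_wpLen (n + 1)).apply_add_sub hn hlt.le (i := r) (by omega)
  rw [show wpLen n - (wpLen (n + 1) - wpLen n) = r by omega] at hsub
  rw [show r + (wpLen (n + 1) - wpLen n) = wpLen n by omega, up_wpLen] at hup
  have cancel : ∀ e f x : Bool, true = (e ^^ (f ^^ x)) → x = (e ^^ !f) := by decide
  exact ⟨by simpa using hsub, cancel _ _ _ hup⟩

lemma wpLen_one : wpLen 1 = 2 := by
  have hle : wpLen 1 ≤ 2 * wpLen 0 + 2 := wpLen_succ_le_two_mul 0
  have hlt := wpLen_strictMono zero_lt_one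
  have heven := (isThetaPrefix_wpLen 1).even
  rw [wpLen_zero] at hle hlt
  omega

lemma wpLen_two : wpLen 2 = 4 := by
  have hle : wpLen 2 + 0 ≤ 2 * wpLen 1 := wpLen_succ_add_le (isThetaPrefix_zero up _)
    (by simp [wpLen_one]) (by simpa [wpLen_zero, wpType] using up_wpLen 0)
  have hlt := wpLen_strictMono one_lt_two
  have heven := (isThetaPrefix_wpLen 2).even
  rw [wpLen_one] at hle hlt
  omega

lemma up_zero : up 0 = true := wpLen_zero ▸ up_wpLen 0

lemma up_one : up 1 = false := by
  simpa [wpLen_one, wpType, up_zero] using isThetaPrefix_wpLen 1 0 (by simp [wpLen_one])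

lemma up_two : up 2 = true := wpLen_one ▸ up_wpLen 1

lemma up_three : up 3 = false := by
  simpa [wpLen_two, wpType, up_zero] using isThetaPrefix_wpLen 2 0 (by simp [wpLen_two])

lemma initialWord_up_four : initialWord up 4 = [true, false, true, false] := by
  simp [initialWord, List.range_succ, up_zero, up_one, up_two, up_three]

/-! ### Classification of pseudopalindromic prefixes -/

/-- Every pseudopalindromic prefix of `u_p` of length at most `|w_n|` is one of the `w_m`, with the
exception of the palindromes `1` and `101`. -/
def PrefixesClassified (n : ℕ) : Prop :=
  ∀ e l, l ≤ wpLen n → IsThetaPrefix up e l →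
    l = 1 ∨ l = 3 ∨ ∃ m, l = wpLen m ∧ (m = 0 ∨ wpType m = e)

lemma prefixesClassified_zero : PrefixesClassified 0 := fun _ _ hl _ ↦
  .inr (.inr ⟨0, by rw [wpLen_zero] at *; omega, .inl rfl⟩)

lemma PrefixesClassified.mono {m n : ℕ} (h : PrefixesClassified n) (hmn : m ≤ n) :
    PrefixesClassified m := fun e l hl ↦
  h e l (hl.trans (wpLen_strictMono.monotone hmn))

lemma PrefixesClassified.exists_eq_wpLen_of_even {n : ℕ} (h : PrefixesClassified n) {e : Bool}
    {l : ℕ} (hl : l ≤ wpLen n) (hle : IsThetaPrefix up e l) (heven : l % 2 = 0) :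
    ∃ m, l = wpLen m ∧ (m = 0 ∨ wpType m = e) := by
  rcases h e l hl hle with rfl | rfl | hm
  · omega
  · omega
  · exact hm

lemma PrefixesClassified.succ {n : ℕ} (h : PrefixesClassified n)
    (hopp : ∀ l, wpLen n < l → l < wpLen (n + 1) → IsThetaPrefix up (!wpType (n + 1)) l →
      l = 1 ∨ l = 3) : PrefixesClassified (n + 1) := by
  intro e l hl hle
  rcases le_or_gt l (wpLen n) with hln | hnl
  · exact h e l hln hle
  by_cases he : e = wpType (n + 1)
  · subst he
    exact .inr (.inr ⟨n + 1, hl.antisymm (wpLen_succ_le_of_isThetaPrefix hle hnl), .inr rfl⟩)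
  · have hne : l ≠ wpLen (n + 1) := fun hlen ↦
      he (hle.eq_of_pos (hlen ▸ isThetaPrefix_wpLen (n + 1)) (by omega))
    rw [Bool.eq_not_of_ne he] at hle
    exact (hopp l hnl (by omega) hle).imp_right .inl

lemma PrefixesClassified.eq_wpLen_of_two_mul_eq_add {n l r : ℕ} (h : PrefixesClassified n)
    (hl : IsThetaPrefix up (!wpType (n + 1)) l) (hlL : l < wpLen (n + 1))
    (hr : 2 * l = wpLen (n + 1) + r) :
    r = 1 ∨ r = 3 ∨ ∃ m ≤ n, r = wpLen m ∧ (m = 0 ∨ wpType m = wpType (n + 1)) := by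
  have hsub := (isThetaPrefix_wpLen (n + 1)).sub hl hl hlL.le hlL.le
  rw [show l - (wpLen (n + 1) - l) = r by omega, Bool.xor_self, Bool.xor_false] at hsub
  have hrn : r ≤ wpLen n := by
    by_contra! hnr
    have := wpLen_succ_le_of_isThetaPrefix hsub hnr
    omega
  refine (h _ _ hrn hsub).imp_right (Or.imp_right ?_)
  rintro ⟨m, rfl, hm⟩
  exact ⟨m, wpLen_strictMono.le_iff_le.1 hrn, rfl, hm⟩

lemma wpType_four_mul (j : ℕ) : wpType (4 * j) = false := by
  rw [wpType_eq_false_iff]; omega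

lemma wpType_four_mul_add_one (j : ℕ) : wpType (4 * j + 1) = true := by
  rw [wpType_eq_true_iff]; omega

lemma wpType_four_mul_add_two (j : ℕ) : wpType (4 * j + 2) = true := by
  rw [wpType_eq_true_iff]; omega

lemma wpType_four_mul_add_three (j : ℕ) : wpType (4 * j + 3) = false := by
  rw [wpType_eq_false_iff]; omega

lemma wpType_four_mul_add_four (j : ℕ) : wpType (4 * j + 4) = false := by
  rw [wpType_eq_false_iff]; omega

lemma isThetaPrefix_wpLen_four_mul (j : ℕ) : IsThetaPrefix up false (wpLen (4 * j)) :=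
  wpType_four_mul j ▸ isThetaPrefix_wpLen _

lemma isThetaPrefix_wpLen_four_mul_add_one (j : ℕ) : IsThetaPrefix up true (wpLen (4 * j + 1)) :=
  wpType_four_mul_add_one j ▸ isThetaPrefix_wpLen _

lemma isThetaPrefix_wpLen_four_mul_add_two (j : ℕ) : IsThetaPrefix up true (wpLen (4 * j + 2)) :=
  wpType_four_mul_add_two j ▸ isThetaPrefix_wpLen _

lemma isThetaPrefix_wpLen_four_mul_add_three (j : ℕ) :
    IsThetaPrefix up false (wpLen (4 * j + 3)) :=
  wpType_four_mul_add_three j ▸ isThetaPrefix_wpLen _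

lemma four_le_wpLen_four_mul_add_two (j : ℕ) : 4 ≤ wpLen (4 * j + 2) :=
  wpLen_two ▸ wpLen_strictMono.monotone (by omega)

lemma up_wpLen_four_mul_add_two_sub_two (j : ℕ) : up (wpLen (4 * j + 2) - 2) = true := by
  have hfour := four_le_wpLen_four_mul_add_two j
  have := isThetaPrefix_wpLen_four_mul_add_two j 1 (by omega)
  rwa [up_one, Nat.sub_sub] at this

section Classification

variable {j : ℕ}

lemma PrefixesClassified.wpLen_four_mul_add_one (h : PrefixesClassified (4 * j)) :
    wpLen (4 * j + 1) = 2 * wpLen (4 * j) + 2 := by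
  have hle := wpLen_succ_le_two_mul (4 * j)
  have heven := (isThetaPrefix_wpLen_four_mul_add_one j).even
  have hlt : wpLen (4 * j) < wpLen (4 * j + 1) := wpLen_strictMono (by omega)
  by_contra hne
  obtain ⟨r, hlen⟩ := Nat.exists_eq_add_of_le (show wpLen (4 * j + 1) ≤ 2 * wpLen (4 * j) by omega)
  obtain ⟨hr, hup⟩ := isThetaPrefix_of_two_mul_eq_add hlen
  rw [wpType_four_mul_add_one] at hr hup
  obtain ⟨m, hm, -⟩ := h.exists_eq_wpLen_of_even (by omega) hr hr.even
  rw [hm, up_wpLen, wpType_four_mul] at hup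
  simp at hup

lemma PrefixesClassified.wpLen_four_mul_add_two (h : PrefixesClassified (4 * j + 1)) :
    wpLen (4 * j + 2) + wpLen (4 * j - 2) = 2 * wpLen (4 * j + 1) := by
  have hlt : wpLen (4 * j + 1) < wpLen (4 * j + 2) := wpLen_strictMono (by omega)
  have hle : wpLen (4 * j + 2) + wpLen (4 * j - 2) ≤ 2 * wpLen (4 * j + 1) := by
    refine wpLen_succ_add_le ?_ (wpLen_strictMono (by omega)) ?_
    · rw [wpType_four_mul_add_two]
      -- For `j = 0` the truncated index `4 * j - 2` is `0`, and the empty word `w_0` is the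
      -- longest `E`-palindromic proper prefix of `w_1`.
      rcases j with _ | j
      · exact wpLen_zero ▸ isThetaPrefix_zero up true
      · exact isThetaPrefix_wpLen_four_mul_add_two j
    · simp [up_wpLen, wpType_four_mul_add_one, wpType_four_mul_add_two]
  obtain ⟨r, hlen⟩ := Nat.exists_eq_add_of_le (le_of_add_le_left hle)
  obtain ⟨hr, -⟩ := isThetaPrefix_of_two_mul_eq_add hlen
  rw [wpType_four_mul_add_two] at hr
  obtain ⟨m, hm, hmtype⟩ := h.exists_eq_wpLen_of_even (by omega) hr hr.even
  have hmlt : m < 4 * j + 1 := wpLen_strictMono.lt_iff_lt.1 (by omega)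
  rw [wpType_eq_true_iff] at hmtype
  have := wpLen_strictMono.monotone (show m ≤ 4 * j - 2 by omega)
  omega

lemma PrefixesClassified.wpLen_four_mul_add_three (h : PrefixesClassified (4 * j + 2)) :
    wpLen (4 * j + 3) + 3 = 2 * wpLen (4 * j + 2) := by
  have hlt : wpLen (4 * j + 2) < wpLen (4 * j + 3) := wpLen_strictMono (by omega)
  have hfour := four_le_wpLen_four_mul_add_two j
  have hle : wpLen (4 * j + 3) + 3 ≤ 2 * wpLen (4 * j + 2) := by
    refine wpLen_succ_add_le ?_ (by omega) ?_
    · rw [wpType_four_mul_add_three, ← theta_initialWord_eq_iff]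
      simp [initialWord, List.range_succ, up_zero, up_one, up_two]
    · simp [up_three, wpType_four_mul_add_two, wpType_four_mul_add_three]
  obtain ⟨r, hlen⟩ := Nat.exists_eq_add_of_le (le_of_add_le_left hle)
  obtain ⟨hr, hup⟩ := isThetaPrefix_of_two_mul_eq_add hlen
  rcases h _ _ (by omega) hr with hone | hthree | ⟨m, hm, -⟩
  · omega
  · omega
  · rw [hm, up_wpLen, wpType_four_mul_add_two, wpType_four_mul_add_three] at hup
    simp at hup

lemma PrefixesClassified.wpLen_four_mul_add_four (h : PrefixesClassified (4 * j + 3)) :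
    wpLen (4 * j + 4) + wpLen (4 * j) = 2 * wpLen (4 * j + 3) := by
  have hlt : wpLen (4 * j + 3) < wpLen (4 * j + 4) := wpLen_strictMono (by omega)
  have hle : wpLen (4 * j + 4) + wpLen (4 * j) ≤ 2 * wpLen (4 * j + 3) := by
    refine wpLen_succ_add_le ?_ (wpLen_strictMono (by omega)) ?_
    · exact wpType_four_mul_add_four j ▸ isThetaPrefix_wpLen_four_mul j
    · simp [up_wpLen, wpType_four_mul_add_three, wpType_four_mul_add_four]
  obtain ⟨r, hlen⟩ := Nat.exists_eq_add_of_le (le_of_add_le_left hle)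
  obtain ⟨hr, hup⟩ := isThetaPrefix_of_two_mul_eq_add hlen
  rw [wpType_four_mul_add_three, wpType_four_mul_add_four] at hup
  rw [wpType_four_mul_add_four] at hr
  rcases h _ _ (by omega) hr with hone | hthree | ⟨m, hm, hmtype⟩
  · simp [hone, up_one] at hup
  · simp [hthree, up_three] at hup
  · have hmlt : m < 4 * j + 3 := wpLen_strictMono.lt_iff_lt.1 (by omega)
    rw [wpType_eq_false_iff] at hmtype
    have := wpLen_strictMono.monotone (show m ≤ 4 * j by omega)
    omega

lemma PrefixesClassified.even_wpLen_four_mul (h : PrefixesClassified (4 * j)) :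
    wpLen (4 * j) % 2 = 0 := by
  induction j with
  | zero => simp [wpLen_zero]
  | succ j ih =>
    have hlen := (h.mono (show 4 * j + 3 ≤ 4 * (j + 1) by omega)).wpLen_four_mul_add_four
    have := ih (h.mono (by omega))
    rw [mul_add_one]
    omega

lemma PrefixesClassified.four_mul_add_one (h : PrefixesClassified (4 * j)) :
    PrefixesClassified (4 * j + 1) := by
  refine h.succ fun l hnl hlL hl ↦ ?_
  have hlen := h.wpLen_four_mul_add_one
  have hn := isThetaPrefix_wpLen_four_mul j
  have hL := isThetaPrefix_wpLen_four_mul_add_one j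
  rw [wpType_four_mul_add_one, Bool.not_true] at hl
  rcases Nat.eq_or_lt_of_le hnl with rfl | hnl'
  · rcases Nat.eq_zero_or_pos (wpLen (4 * j)) with hzero | hpos
    · omega
    · have := hl.apply_add_sub hn (by omega) hpos
      simp [up_zero, up_one] at this
  · -- The shift by `|w_{4j+1}| - l` exchanges the letters, yet it takes the letter `1` that follows
    -- the prefix `w_m` to the letter `1` that follows the prefix `w_{4j}`.
    exfalso
    have hsub := hL.sub hl hn hlL.le (by omega)
    obtain ⟨m, hm, -⟩ := h.exists_eq_wpLen_of_even (by omega) hsub hsub.even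
    have hup := hL.apply_add_sub hl hlL.le (i := wpLen m) (by omega)
    rw [show wpLen m + (wpLen (4 * j + 1) - l) = wpLen (4 * j) by omega, up_wpLen, up_wpLen] at hup
    simp at hup

lemma PrefixesClassified.four_mul_add_two (h : PrefixesClassified (4 * j + 1)) :
    PrefixesClassified (4 * j + 2) := by
  refine h.succ fun l hnl (hlL : l < wpLen (4 * j + 2)) hl ↦ ?_
  have hlen := h.wpLen_four_mul_add_two
  obtain ⟨r, hr⟩ := Nat.exists_eq_add_of_le (show wpLen (4 * j + 2) ≤ 2 * l by omega)
  have hrn : r = wpLen (4 * j + 1) := by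
    have heven := (isThetaPrefix_wpLen_four_mul_add_two j).even
    rcases h.eq_wpLen_of_two_mul_eq_add hl hlL hr with hone | hthree | ⟨m, hmn, hm, hmtype⟩
    · omega
    · omega
    · have hlt : 4 * j - 2 < m := wpLen_strictMono.lt_iff_lt.1 (by omega)
      rw [wpType_four_mul_add_two, wpType_eq_true_iff] at hmtype
      rw [hm, show m = 4 * j + 1 by omega]
  rw [wpType_four_mul_add_two, Bool.not_true] at hl
  have hsub := (isThetaPrefix_wpLen_four_mul_add_two j).sub hl
    (isThetaPrefix_wpLen_four_mul_add_one j) hlL.le (by omega)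
  rcases h _ _ (by omega) hsub with hone | hthree | ⟨m, hm, hmtype⟩
  · omega
  · rcases j with _ | j
    · rw [wpLen_one] at *; omega
    · have := four_le_wpLen_four_mul_add_two j
      have : wpLen (4 * j + 2) < wpLen (4 * (j + 1) + 1) := wpLen_strictMono (by omega)
      rw [show 4 * (j + 1) - 2 = 4 * j + 2 by omega] at hlen
      omega
  · have hlen' := (h.mono (Nat.le_succ _)).wpLen_four_mul_add_one
    have hmlt : m < 4 * j + 1 := wpLen_strictMono.lt_iff_lt.1 (by omega)
    have := wpLen_strictMono.monotone (show m ≤ 4 * j by omega)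
    omega

lemma PrefixesClassified.four_mul_add_three (h : PrefixesClassified (4 * j + 2)) :
    PrefixesClassified (4 * j + 3) := by
  refine h.succ fun l hnl (hlL : l < wpLen (4 * j + 3)) hl ↦ ?_
  exfalso
  have hlen := h.wpLen_four_mul_add_three
  have hfour := four_le_wpLen_four_mul_add_two j
  obtain ⟨r, hr⟩ := Nat.exists_eq_add_of_le (show wpLen (4 * j + 3) ≤ 2 * l by omega)
  rcases h.eq_wpLen_of_two_mul_eq_add hl hlL hr with hone | hthree | ⟨m, hmn, hm, hmtype⟩
  · omega
  · omega
  rw [wpType_four_mul_add_three, wpType_eq_false_iff] at hmtype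
  obtain ⟨i, rfl | rfl⟩ : ∃ i, m = 4 * i ∨ m = 4 * i + 3 := ⟨m / 4, by omega⟩
  · have := (h.mono hmn).even_wpLen_four_mul
    omega
  · -- The shift by `|w_{4j+3}| - l` exchanges the letters, yet it takes the central
    -- letter `1` of `w_{4i+3}` to the central letter `1` of `w_{4j+3}`.
    have hi := (h.mono (show 4 * i + 2 ≤ 4 * j + 2 by omega)).wpLen_four_mul_add_three
    have hfour' := four_le_wpLen_four_mul_add_two i
    rw [wpType_four_mul_add_three, Bool.not_false] at hl
    have hcenter := (isThetaPrefix_wpLen_four_mul_add_three j).apply_add_sub hl hlL.le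
      (i := wpLen (4 * i + 2) - 2) (by omega)
    rw [show wpLen (4 * i + 2) - 2 + (wpLen (4 * j + 3) - l) = wpLen (4 * j + 2) - 2 by omega,
      up_wpLen_four_mul_add_two_sub_two, up_wpLen_four_mul_add_two_sub_two] at hcenter
    simp at hcenter

lemma PrefixesClassified.four_mul_add_four (h : PrefixesClassified (4 * j + 3)) :
    PrefixesClassified (4 * j + 4) := by
  refine h.succ fun l hnl (hlL : l < wpLen (4 * j + 4)) hl ↦ ?_
  exfalso
  have hlen := h.wpLen_four_mul_add_four
  have hodd := (h.mono (Nat.le_succ _)).wpLen_four_mul_add_three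
  have heven := (h.mono (show 4 * j ≤ 4 * j + 3 by omega)).even_wpLen_four_mul
  obtain ⟨r, hr⟩ := Nat.exists_eq_add_of_le (show wpLen (4 * j + 4) ≤ 2 * l by omega)
  rcases h.eq_wpLen_of_two_mul_eq_add hl hlL hr with hone | hthree | ⟨m, hmn, hm, hmtype⟩
  · omega
  · omega
  · rw [wpType_four_mul_add_four, wpType_eq_false_iff] at hmtype
    obtain rfl | hmj : m = 4 * j + 3 ∨ m ≤ 4 * j := by omega
    · omega
    · have := wpLen_strictMono.monotone hmj
      omega

end Classification

theorem prefixesClassified (n : ℕ) : PrefixesClassified n := by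
  have hfour : ∀ j, PrefixesClassified (4 * j) := fun j ↦ by
    induction j with
    | zero => exact prefixesClassified_zero
    | succ j ih =>
      exact ih.four_mul_add_one.four_mul_add_two.four_mul_add_three.four_mul_add_four
  exact (hfour n).mono (by omega)

/-! ### Bispecial overlap products -/

lemma FactorUp.of_isInfix {v w : Word} (hw : FactorUp w) (hvw : v <:+: w) : FactorUp v :=
  hw.imp fun _ h ↦ hvw.trans h

lemma FactorUp.theta {w : Word} (hw : FactorUp w) (e : Bool) : FactorUp (theta e w) := by
  obtain ⟨n, hn⟩ := hw
  obtain ⟨m, hnm, rfl⟩ : ∃ m, n ≤ m ∧ wpType m = e := by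
    cases e
    · exact ⟨4 * n, by omega, wpType_four_mul n⟩
    · exact ⟨4 * n + 1, by omega, wpType_four_mul_add_one n⟩
  exact ⟨m, theta_wp m ▸ theta_isInfix_theta (hn.trans (wp_isPrefix hnm).isInfix)⟩

/-- The overlap product `θ(B) · A⁻¹ · P · A⁻¹ · B` for `θ = theta e`. -/
def overlapProduct (e : Bool) (A B P : Word) : Word :=
  theta e B ++ P.drop A.length ++ B.drop A.length

lemma s1_succ (j : ℕ) :
    s1 (j + 1) = overlapProduct false (wp (4 * j)) (wp (4 * j + 1)) (wp (4 * j + 3)) := by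
  rw [overlapProduct, theta_false]
  rfl

lemma s3_succ (j : ℕ) :
    s3 (j + 1) = overlapProduct true (wp (4 * j + 2)) (wp (4 * j + 3)) (wp (4 * j + 5)) := by
  rw [overlapProduct, theta_true]
  rfl

/-- The overlap product `s = θ(B) · A⁻¹ · P · A⁻¹ · B`, for `θ = theta e`, is well defined, fixed
by `θ`, contained in `T`, and a bispecial factor of `u_p` with the two bilateral extensions that
`θ` maps to each other, `1·s·0` and `0·s·1` for `θ = R`, `0·s·0` and `1·s·1` for `θ = E`. -/
structure IsBispecialOverlap (e : Bool) (A B P T s : Word) : Prop where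
  overlap : ∃ x y : Word, theta e B = x ++ A ∧ B = A ++ y ∧ A <+: P ∧ A <:+ P ∧ s = x ++ P ++ y
  fixed : theta e s = s
  isInfix : s <:+: T
  left_special : ∀ a : Bool, FactorUp (a :: s)
  right_special : ∀ b : Bool, FactorUp (s ++ [b])
  extension_false : FactorUp ((!e) :: s ++ [false])
  extension_true : FactorUp (e :: s ++ [true])

lemma isInfix_of_overlap {e c d : Bool} {A P Q T y : Word} (hA : theta e A = A)
    (hP : theta e P = P) (hQ : theta e Q = Q) (hAP : A ++ y ++ [c] <+: P) (hPQ : P <+: Q)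
    (hlen : Q.length + A.length = 2 * P.length) (hT : Q ++ y ++ [d] <+: T) :
    (e ^^ c) :: (theta e y ++ P ++ y) ++ [d] <:+: T := by
  obtain ⟨p, hp⟩ := hAP
  obtain ⟨t, rfl⟩ := hT
  have hQp : Q = theta e (y ++ [c] ++ p) ++ P :=
    eq_theta_append_of_overlap hA hP hQ (by simp [← hp]) hPQ hlen
  exact ⟨theta e p, t, by simp [hQp]⟩

lemma isBispecialOverlap_of_isPrefix {e : Bool} {A B P Q y : Word} {n : ℕ}
    (hA : theta e A = A) (hP : theta e P = P) (hQ : theta e Q = Q) (hB : B = A ++ y)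
    (hBP : B ++ [true] <+: P) (hPQ : P <+: Q) (hlen : Q.length + A.length = 2 * P.length)
    (hT : Q ++ y ++ [false] <+: wp n) :
    IsBispecialOverlap e A B P (wp n) (overlapProduct e A B P) := by
  subst hB
  have hAP : A <+: P := (A.prefix_append _).trans ((List.prefix_append _ _).trans hBP)
  have hs : overlapProduct e A (A ++ y) P = theta e y ++ P ++ y := by
    obtain ⟨p, rfl⟩ := hAP
    simp [overlapProduct, hA]
  have hfix : theta e (theta e y ++ P ++ y) = theta e y ++ P ++ y := by simp [hP]
  have hinf : (!e) :: (theta e y ++ P ++ y) ++ [false] <:+: wp n := by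
    simpa using isInfix_of_overlap hA hP hQ hBP hPQ hlen hT
  have hfalse : FactorUp ((!e) :: (theta e y ++ P ++ y) ++ [false]) := ⟨n, hinf⟩
  have htrue : FactorUp (e :: (theta e y ++ P ++ y) ++ [true]) := by
    have := hfalse.theta e
    simpa [hP] using this
  rw [hs]
  generalize hw : theta e y ++ P ++ y = s at *
  have hleft : ∀ {a b}, FactorUp (a :: s ++ [b]) → FactorUp (a :: s) := fun h ↦
    h.of_isInfix (List.prefix_append _ _).isInfix
  have hright : ∀ {a b}, FactorUp (a :: s ++ [b]) → FactorUp (s ++ [b]) := fun h ↦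
    h.of_isInfix (List.suffix_cons _ _).isInfix
  exact {
    overlap := ⟨theta e y, y, by simp [hA], rfl, hAP, by
      simpa only [hA, hP] using theta_isSuffix_theta (e := e) hAP, hw.symm⟩
    fixed := hfix
    isInfix := .trans ⟨[!e], [false], by simp⟩ hinf
    left_special := fun a ↦ by
      rcases Bool.eq_or_eq_not a e with rfl | rfl
      exacts [hleft htrue, hleft hfalse]
    right_special := fun b ↦ by
      cases b
      exacts [hright hfalse, hright htrue]
    extension_false := hfalse
    extension_true := htrue }

lemma wp_four_mul_add_one_eq (j : ℕ) :
    wp (4 * j + 1) = wp (4 * j) ++ [true, false] ++ theta true (wp (4 * j)) := by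
  have hlen := (prefixesClassified (4 * j)).wpLen_four_mul_add_one
  have hfix := theta_wp (4 * j + 1)
  rw [wpType_four_mul_add_one] at hfix
  have hlen' : (wp (4 * j + 1)).length = 2 * (wp (4 * j) ++ [true]).length := by
    rw [List.length_append, List.length_singleton]
    exact hlen
  simpa using eq_append_theta (z := []) hfix
    (by simpa using wp_append_true_isPrefix (4 * j).lt_add_one) hlen'

lemma exists_wp_four_mul_add_two_eq (j : ℕ) :
    ∃ g, wp (4 * j + 2) = g ++ [true, false, true, false] := by
  have hpre : initialWord up 4 <+: wp (4 * j + 2) :=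
    initialWord_up_wpLen _ ▸ initialWord_isPrefix up (four_le_wpLen_four_mul_add_two j)
  have hfix := theta_wp (4 * j + 2)
  rw [wpType_four_mul_add_two] at hfix
  obtain ⟨g, hg⟩ := theta_isSuffix_theta (e := true) hpre
  rw [hfix, initialWord_up_four] at hg
  exact ⟨g, hg.symm⟩

lemma wp_four_mul_add_three_eq {j : ℕ} {g : Word}
    (hg : wp (4 * j + 2) = g ++ [true, false, true, false]) :
    wp (4 * j + 3) = wp (4 * j + 2) ++ [true] ++ theta false g := by
  have hlen := (prefixesClassified (4 * j + 2)).wpLen_four_mul_add_three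
  have hfix := theta_wp (4 * j + 3)
  rw [wpType_four_mul_add_three] at hfix
  have hpre := wp_isPrefix (4 * j + 2).le_succ
  have hlen' : (wp (4 * j + 3)).length = 2 * (g ++ [true]).length + 3 := by
    rw [wpLen, wpLen, hg] at hlen
    simp only [List.length_append, List.length_cons, List.length_nil] at hlen ⊢
    omega
  rw [hg] at hpre ⊢
  simpa using eq_append_theta (v := g ++ [true]) (z := [false, true, false]) hfix
    (by simpa using hpre) hlen'

theorem s1_isBispecialOverlap (j : ℕ) :
    IsBispecialOverlap false (wp (4 * j)) (wp (4 * j + 1)) (wp (4 * j + 3)) (wp (4 * j + 5))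
      (s1 (j + 1)) := by
  have hA : theta false (wp (4 * j)) = wp (4 * j) := wpType_four_mul j ▸ theta_wp _
  have hP : theta false (wp (4 * j + 3)) = wp (4 * j + 3) :=
    wpType_four_mul_add_three j ▸ theta_wp _
  have hQ : theta false (wp (4 * j + 4)) = wp (4 * j + 4) := wpType_four_mul_add_four j ▸ theta_wp _
  have hT : wp (4 * j + 4) ++ ([true, false] ++ theta true (wp (4 * j))) ++ [false] <+:
      wp (4 * j + 5) := by
    have hpre : wp (4 * j) ++ [true] <+: wp (4 * j + 4) := wp_append_true_isPrefix (by omega)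
    have hsuf : true :: wp (4 * j) <:+ wp (4 * j + 4) := by
      simpa [hA, hQ] using theta_isSuffix_theta (e := false) hpre
    rw [show wp (4 * j + 5) = _ from wp_four_mul_add_one_eq (j + 1)]
    simpa [mul_add_one] using theta_isPrefix_theta (e := true) hsuf
  rw [s1_succ]
  exact isBispecialOverlap_of_isPrefix hA hP hQ
    ((wp_four_mul_add_one_eq j).trans (List.append_assoc _ _ _))
    (wp_append_true_isPrefix (by omega)) (wp_isPrefix (by omega))
    (prefixesClassified _).wpLen_four_mul_add_four hT

theorem s3_isBispecialOverlap (j : ℕ) :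
    IsBispecialOverlap true (wp (4 * j + 2)) (wp (4 * j + 3)) (wp (4 * j + 5)) (wp (4 * j + 7))
      (s3 (j + 1)) := by
  have hA : theta true (wp (4 * j + 2)) = wp (4 * j + 2) := wpType_four_mul_add_two j ▸ theta_wp _
  have hP : theta true (wp (4 * j + 5)) = wp (4 * j + 5) :=
    wpType_four_mul_add_one (j + 1) ▸ theta_wp _
  have hQ : theta true (wp (4 * j + 6)) = wp (4 * j + 6) :=
    wpType_four_mul_add_two (j + 1) ▸ theta_wp _
  obtain ⟨g, hg⟩ := exists_wp_four_mul_add_two_eq j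
  have hT : wp (4 * j + 6) ++ ([true] ++ theta false g) ++ [false] <+: wp (4 * j + 7) := by
    have hpre : wp (4 * j + 2) ++ [true] <+: wp (4 * j + 6) := wp_append_true_isPrefix (by omega)
    obtain ⟨q, hq⟩ : false :: wp (4 * j + 2) <:+ wp (4 * j + 6) := by
      simpa [hA, hQ] using theta_isSuffix_theta (e := true) hpre
    have hq' : wp (4 * (j + 1) + 2) = q ++ false :: g ++ [true, false, true, false] := by
      simpa [hg, mul_add_one] using hq.symm
    rw [show wp (4 * j + 7) = _ from wp_four_mul_add_three_eq hq']
    simp [mul_add_one]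
  rw [s3_succ]
  exact isBispecialOverlap_of_isPrefix hA hP hQ
    ((wp_four_mul_add_three_eq hg).trans (List.append_assoc _ _ _))
    (wp_append_true_isPrefix (by omega)) (wp_isPrefix (by omega))
    ((prefixesClassified _).wpLen_four_mul_add_two (j := j + 1)) hT

/-- `s_{4k+1}` and `s_{4k+3}` are bispecial factors of `u_p`;
`s_{4k+1}` is a palindrome contained in `w_{4k+1}` with bilateral extensions
`1·s_{4k+1}·0` and `0·s_{4k+1}·1`, and `s_{4k+3}` is an `E`-palindrome contained in
`w_{4k+3}` with bilateral extensions `0·s_{4k+3}·0` and `1·s_{4k+3}·1`. -/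
theorem s1_s3_bispecial (k : ℕ) (hk : 1 ≤ k) :
    (∃ x y : Word, (wp (4*k-3)).reverse = x ++ wp (4*k-4) ∧
        wp (4*k-3) = wp (4*k-4) ++ y ∧
        wp (4*k-4) <+: wp (4*k-1) ∧ wp (4*k-4) <:+ wp (4*k-1) ∧
        s1 k = x ++ wp (4*k-1) ++ y) ∧
    IsPal (s1 k) ∧ (s1 k) <:+: wp (4*k+1) ∧
    (∀ a : Bool, FactorUp (a :: s1 k)) ∧ (∀ b : Bool, FactorUp (s1 k ++ [b])) ∧
    FactorUp (true :: s1 k ++ [false]) ∧ FactorUp (false :: s1 k ++ [true]) ∧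
    (∃ x y : Word, Ebar (wp (4*k-1)) = x ++ wp (4*k-2) ∧
        wp (4*k-1) = wp (4*k-2) ++ y ∧
        wp (4*k-2) <+: wp (4*k+1) ∧ wp (4*k-2) <:+ wp (4*k+1) ∧
        s3 k = x ++ wp (4*k+1) ++ y) ∧
    IsEPal (s3 k) ∧ (s3 k) <:+: wp (4*k+3) ∧
    (∀ a : Bool, FactorUp (a :: s3 k)) ∧ (∀ b : Bool, FactorUp (s3 k ++ [b])) ∧
    FactorUp (false :: s3 k ++ [false]) ∧ FactorUp (true :: s3 k ++ [true]) := by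
  obtain ⟨j, rfl⟩ : ∃ j, k = j + 1 := ⟨k - 1, by omega⟩
  have h1 := s1_isBispecialOverlap j
  have h3 := s3_isBispecialOverlap j
  exact ⟨theta_false _ ▸ h1.overlap, (theta_false _).symm.trans h1.fixed, h1.isInfix,
    h1.left_special, h1.right_special, h1.extension_false, h1.extension_true,
    theta_true _ ▸ h3.overlap, (theta_true _).symm.trans h3.fixed, h3.isInfix,
    h3.left_special, h3.right_special, h3.extension_false, h3.extension_true⟩
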